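/- If f ∈ F_2[x] is a monic irreducible polynomial of type (B,n) for some integer n > 1, then its Q-transform f^Q is a monic irreducible polynomial of degree 2n of type (D,2n), i.e. coeff f^Q (2n−1) = 0 and coeff f^Q 1 = 0. -/

import Mathlib

open Polynomial

noncomputable def Qtrans (f : Polynomial (ZMod 2)) : Polynomial (ZMod 2) :=
  ∑ i ∈ Finset.range (f.natDegree + 1),
    C (f.coeff i) * X ^ (f.natDegree - i) * (X ^ 2 + 1) ^ i

/-!
Let `b` be a root of `f^Q`. Then `c = b + b⁻¹` is a root of `f`, so `n = deg f` divides
`[F₂(b) : F₂]`. In characteristic two `c⁻¹ = y + y²` with `y = (b + 1)⁻¹`, so `c⁻¹` has trace zero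
from `F₂(b)` to `F₂`. On the other hand this trace equals `-[F₂(b) : F₂(c)] · a₁ / a₀`. As
`a₁ = a₀ = 1`, the degree `[F₂(b) : F₂(c)]` is even, hence `2n` divides `[F₂(b) : F₂]` and `f^Q`,
of degree `2n`, is the minimal polynomial of `b`.

The two coefficients agree because `f^Q` is self-reciprocal, and the lower one is `a_{n-1}`.
-/

section Reverse

variable {R : Type*} [Semiring R] {f : R[X]}

theorem reflect_sum {ι : Type*} (s : Finset ι) (g : ι → R[X]) (N : ℕ) :
    reflect N (∑ i ∈ s, g i) = ∑ i ∈ s, reflect N (g i) := by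
  ext
  simp only [coeff_reflect, finsetSum_coeff]

theorem natDegree_reverse_of_coeff_zero_ne_zero (h : f.coeff 0 ≠ 0) :
    f.reverse.natDegree = f.natDegree := by
  rw [reverse_natDegree, natTrailingDegree_eq_zero_of_constantCoeff_ne_zero h, Nat.sub_zero]

theorem leadingCoeff_reverse_of_coeff_zero_ne_zero (h : f.coeff 0 ≠ 0) :
    f.reverse.leadingCoeff = f.coeff 0 := by
  rw [reverse_leadingCoeff, trailingCoeff, natTrailingDegree_eq_zero_of_constantCoeff_ne_zero h]

theorem reverse_reverse_of_coeff_zero_ne_zero (h : f.coeff 0 ≠ 0) : f.reverse.reverse = f := by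
  rw [reverse, natDegree_reverse_of_coeff_zero_ne_zero h, reverse, reflect_reflect]

theorem nextCoeff_reverse_of_coeff_zero_ne_zero (h : f.coeff 0 ≠ 0) :
    f.reverse.nextCoeff = f.coeff 1 := by
  rw [← coeff_one_reverse, reverse_reverse_of_coeff_zero_ne_zero h]

end Reverse

section Trace

open scoped IntermediateField

variable {K L : Type*} [Field K] [Field L] [Algebra K L]

theorem adjoin_simple_inv (x : L) : K⟮x⁻¹⟯ = K⟮x⟯ := by
  apply le_antisymm <;> rw [IntermediateField.adjoin_simple_le_iff]
  · exact inv_mem (IntermediateField.mem_adjoin_simple_self K x)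
  · simpa using inv_mem (IntermediateField.mem_adjoin_simple_self K x⁻¹)

theorem reverse_minpoly {x : L} (hx : IsIntegral K x) (hx0 : x ≠ 0) :
    (minpoly K x).reverse = C ((minpoly K x).coeff 0) * minpoly K x⁻¹ := by
  have hcoeff : (minpoly K x).coeff 0 ≠ 0 := minpoly.coeff_zero_ne_zero hx hx0
  have hdvd : minpoly K x⁻¹ ∣ (minpoly K x).reverse := by
    let _ := invertibleOfNonzero hx0
    apply minpoly.dvd
    rw [← invOf_eq_inv, aeval_def, eval₂_reverse_eq_zero_iff]
    exact minpoly.aeval K x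
  have hdeg : (minpoly K x⁻¹).natDegree = (minpoly K x).natDegree := by
    rw [← IntermediateField.adjoin.finrank hx, ← IntermediateField.adjoin.finrank hx.inv,
      adjoin_simple_inv]
  rw [← leadingCoeff_reverse_of_coeff_zero_ne_zero hcoeff]
  exact eq_leadingCoeff_mul_of_monic_of_dvd_of_natDegree_le (minpoly.monic hx.inv) hdvd
    ((reverse_natDegree_le _).trans hdeg.ge)

theorem trace_inv_eq_finrank_mul_minpoly_coeff [FiniteDimensional K L] {x : L} (hx : x ≠ 0) :
    Algebra.trace K L x⁻¹ =
      Module.finrank K⟮x⟯ L * -((minpoly K x).coeff 1 / (minpoly K x).coeff 0) := by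
  have hint : IsIntegral K x := .of_finite K x
  have hcoeff : (minpoly K x).coeff 0 ≠ 0 := minpoly.coeff_zero_ne_zero hint hx
  rw [trace_eq_finrank_mul_minpoly_nextCoeff, adjoin_simple_inv,
    ← nextCoeff_reverse_of_coeff_zero_ne_zero hcoeff, reverse_minpoly hint hx, nextCoeff_C_mul,
    mul_div_cancel_left₀ _ hcoeff]

theorem trace_pow_card [Fintype K] [Algebra.IsAlgebraic K L] (x : L) :
    Algebra.trace K L (x ^ Fintype.card K) = Algebra.trace K L x :=
  Algebra.trace_eq_of_algEquiv (FiniteField.frobeniusAlgEquivOfAlgebraic K L) x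

end Trace

-- At `b = 0` and `b = 1` the left side is the junk value `0⁻¹ = 0`, and the identity still holds.
theorem inv_self_add_inv_of_charTwo {L : Type*} [Field L] [CharP L 2] (b : L) :
    (b + b⁻¹)⁻¹ = (b + 1)⁻¹ + (b + 1)⁻¹ ^ 2 := by
  rcases eq_or_ne b 0 with rfl | hb
  · simp [CharTwo.add_self_eq_zero]
  rcases eq_or_ne (b + 1) 0 with hb1 | hb1
  · obtain rfl : b = 1 := CharTwo.add_eq_zero.mp hb1
    simp [CharTwo.add_self_eq_zero]
  have hfactor : b + b⁻¹ = (b + 1) ^ 2 * b⁻¹ := by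
    rw [CharTwo.add_sq]
    field_simp
  have htwo : (2 : L) = 0 := CharTwo.two_eq_zero
  rw [hfactor]
  field_simp
  linear_combination -htwo

theorem trace_inv_self_add_inv_eq_zero {L : Type*} [Field L] [Algebra (ZMod 2) L]
    [Algebra.IsAlgebraic (ZMod 2) L] (b : L) :
    Algebra.trace (ZMod 2) L (b + b⁻¹)⁻¹ = 0 := by
  have : CharP L 2 := charP_of_injective_algebraMap (algebraMap (ZMod 2) L).injective 2
  have hfrob := trace_pow_card (K := ZMod 2) (b + 1)⁻¹
  rw [ZMod.card] at hfrob
  rw [inv_self_add_inv_of_charTwo, map_add, hfrob, CharTwo.add_self_eq_zero]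

section SelfReciprocal

variable {R : Type*} [CommSemiring R]

theorem natDegree_X_sq_add_one_pow_le (i : ℕ) : ((X ^ 2 + 1 : R[X]) ^ i).natDegree ≤ 2 * i := by
  rw [mul_comm]
  exact natDegree_pow_le_of_le i (by compute_degree)

theorem reflect_X_sq_add_one_pow (i : ℕ) :
    reflect (2 * i) ((X ^ 2 + 1 : R[X]) ^ i) = (X ^ 2 + 1) ^ i := by
  induction i with
  | zero => simp
  | succ i ih =>
    have hbase : reflect 2 (X ^ 2 + 1 : R[X]) = X ^ 2 + 1 := by
      rw [reflect_add, reflect_monomial, reflect_one, revAt_le le_rfl, Nat.sub_self, pow_zero,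
        add_comm]
    rw [mul_add_one, pow_succ,
      reflect_mul _ _ (natDegree_X_sq_add_one_pow_le i) (by compute_degree), ih, hbase]

theorem coeff_zero_X_sq_add_one_pow (i : ℕ) : ((X ^ 2 + 1 : R[X]) ^ i).coeff 0 = 1 := by
  simp [coeff_zero_eq_eval_zero]

theorem coeff_one_X_sq_add_one_pow (i : ℕ) : ((X ^ 2 + 1 : R[X]) ^ i).coeff 1 = 0 := by
  have hexpand : (X ^ 2 + 1 : R[X]) ^ i = expand R 2 ((X + 1) ^ i) := by simp
  rw [hexpand, coeff_expand two_pos, if_neg (by decide)]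

end SelfReciprocal

section Qtrans

variable {f : (ZMod 2)[X]}

theorem natDegree_Qtrans_le (f : (ZMod 2)[X]) : (Qtrans f).natDegree ≤ 2 * f.natDegree := by
  refine natDegree_sum_le_of_forall_le _ _ fun i hi => ?_
  have hmonomial := natDegree_C_mul_X_pow_le (f.coeff i) (f.natDegree - i)
  have hpow := natDegree_X_sq_add_one_pow_le (R := ZMod 2) i
  have hi' := Finset.mem_range_succ_iff.mp hi
  refine natDegree_mul_le.trans ?_
  omega

theorem reflect_Qtrans (f : (ZMod 2)[X]) : reflect (2 * f.natDegree) (Qtrans f) = Qtrans f := by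
  rw [Qtrans, reflect_sum]
  refine Finset.sum_congr rfl fun i hi => ?_
  have hi' := Finset.mem_range_succ_iff.mp hi
  have hdeg : 2 * f.natDegree = 2 * (f.natDegree - i) + 2 * i := by omega
  have hmonomial := natDegree_C_mul_X_pow_le (f.coeff i) (f.natDegree - i)
  rw [hdeg, reflect_mul _ _ (by omega) (natDegree_X_sq_add_one_pow_le i),
    reflect_X_sq_add_one_pow, reflect_C_mul_X_pow, revAt_le (by omega), two_mul,
    Nat.add_sub_cancel]

theorem coeff_Qtrans_two_mul_natDegree_sub {k : ℕ} (hk : k ≤ 2 * f.natDegree) :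
    (Qtrans f).coeff (2 * f.natDegree - k) = (Qtrans f).coeff k := by
  rw [← revAt_le hk, ← coeff_reflect, reflect_Qtrans]

theorem coeff_zero_Qtrans (f : (ZMod 2)[X]) : (Qtrans f).coeff 0 = f.leadingCoeff := by
  simp only [Qtrans, finsetSum_coeff, mul_assoc, coeff_C_mul]
  simp only [mul_coeff_zero, coeff_zero_X_sq_add_one_pow, coeff_X_pow, mul_ite, mul_one, mul_zero]
  rw [Finset.sum_eq_single_of_mem f.natDegree (Finset.self_mem_range_succ _)
    fun i hi hne => if_neg (by have := Finset.mem_range_succ_iff.mp hi; omega)]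
  rw [if_pos (Nat.sub_self _).symm, leadingCoeff]

theorem coeff_one_Qtrans (f : (ZMod 2)[X]) : (Qtrans f).coeff 1 = f.nextCoeff := by
  simp only [Qtrans, finsetSum_coeff, mul_assoc, coeff_C_mul]
  simp only [mul_coeff_one, coeff_zero_X_sq_add_one_pow, coeff_one_X_sq_add_one_pow, coeff_X_pow,
    mul_ite, mul_one, mul_zero, zero_add]
  rcases Nat.eq_zero_or_pos f.natDegree with hdeg | hdeg
  · simp [hdeg, nextCoeff]
  · rw [Finset.sum_eq_single_of_mem (f.natDegree - 1) (Finset.mem_range.mpr (by omega))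
      fun i _ hne => if_neg (by omega)]
    rw [if_pos (by omega), nextCoeff_of_natDegree_pos hdeg]

theorem natDegree_Qtrans (f : (ZMod 2)[X]) : (Qtrans f).natDegree = 2 * f.natDegree := by
  rcases eq_or_ne f 0 with rfl | hf
  · simp [Qtrans]
  refine natDegree_eq_of_le_of_coeff_ne_zero (natDegree_Qtrans_le f) ?_
  have hlead := coeff_Qtrans_two_mul_natDegree_sub (f := f) (Nat.zero_le _)
  rw [Nat.sub_zero, coeff_zero_Qtrans] at hlead
  rw [hlead]
  exact leadingCoeff_ne_zero.mpr hf

theorem leadingCoeff_Qtrans (f : (ZMod 2)[X]) : (Qtrans f).leadingCoeff = f.leadingCoeff := by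
  rw [leadingCoeff, natDegree_Qtrans, ← coeff_zero_Qtrans,
    ← coeff_Qtrans_two_mul_natDegree_sub (Nat.zero_le _), Nat.sub_zero]

theorem aeval_Qtrans {L : Type*} [Field L] [Algebra (ZMod 2) L] (f : (ZMod 2)[X]) {b : L}
    (hb : b ≠ 0) : aeval b (Qtrans f) = b ^ f.natDegree * aeval (b + b⁻¹) f := by
  have hfactor : b ^ 2 + 1 = b * (b + b⁻¹) := by field_simp
  rw [Qtrans, map_sum, aeval_eq_sum_range, Finset.mul_sum]
  refine Finset.sum_congr rfl fun i hi => ?_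
  have hpow : b ^ f.natDegree = b ^ (f.natDegree - i) * b ^ i := by
    rw [← pow_add, Nat.sub_add_cancel (Finset.mem_range_succ_iff.mp hi)]
  simp only [map_mul, map_pow, map_add, aeval_X, aeval_C, map_one, Algebra.smul_def]
  rw [hfactor, mul_pow, hpow]
  ring

theorem two_mul_natDegree_dvd_finrank {L : Type*} [Field L] [Algebra (ZMod 2) L]
    [FiniteDimensional (ZMod 2) L] (hmon : f.Monic) (hirr : Irreducible f)
    (h0 : f.coeff 0 ≠ 0) (h1 : f.coeff 1 ≠ 0) {b : L} (hb : aeval b (Qtrans f) = 0) :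
    2 * f.natDegree ∣ Module.finrank (ZMod 2) L := by
  have hb0 : b ≠ 0 := by
    rintro rfl
    rw [← coeff_zero_eq_aeval_zero', coeff_zero_Qtrans, hmon.leadingCoeff, map_one] at hb
    exact one_ne_zero hb
  have hroot : aeval (b + b⁻¹) f = 0 := by
    rw [aeval_Qtrans f hb0] at hb
    exact (mul_eq_zero.mp hb).resolve_left (pow_ne_zero _ hb0)
  generalize hc : b + b⁻¹ = c at hroot
  have hc0 : c ≠ 0 := by
    rintro rfl
    rw [← coeff_zero_eq_aeval_zero', map_eq_zero] at hroot
    exact h0 hroot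
  have hmin : minpoly (ZMod 2) c = f := (minpoly.eq_of_irreducible_of_monic hirr hroot hmon).symm
  have htrace := trace_inv_eq_finrank_mul_minpoly_coeff (K := ZMod 2) hc0
  rw [← hc, trace_inv_self_add_inv_eq_zero, hc, hmin, zero_eq_mul, neg_eq_zero,
    ZMod.natCast_eq_zero_iff] at htrace
  have heven := htrace.resolve_right (div_ne_zero h1 h0)
  rw [← Module.finrank_mul_finrank (ZMod 2) (IntermediateField.adjoin (ZMod 2) {c}) L,
    IntermediateField.adjoin.finrank (.of_finite _ c), hmin, mul_comm 2]
  exact mul_dvd_mul_left _ heven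

theorem irreducible_Qtrans (hmon : f.Monic) (hirr : Irreducible f)
    (h0 : f.coeff 0 ≠ 0) (h1 : f.coeff 1 ≠ 0) : Irreducible (Qtrans f) := by
  have hQmon : (Qtrans f).Monic := (leadingCoeff_Qtrans f).trans hmon
  have hpos : 0 < (Qtrans f).natDegree := by
    rw [natDegree_Qtrans]
    exact Nat.mul_pos two_pos hirr.natDegree_pos
  obtain ⟨b, hb⟩ := IsAlgClosed.exists_aeval_eq_zero (AlgebraicClosure (ZMod 2)) (Qtrans f)
    (natDegree_pos_iff_degree_pos.mp hpos).ne'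
  have hint : IsIntegral (ZMod 2) b := ⟨Qtrans f, hQmon, hb⟩
  have := IntermediateField.adjoin.finiteDimensional hint
  have hgen : aeval (IntermediateField.AdjoinSimple.gen (ZMod 2) b) (Qtrans f) = 0 := by
    rwa [← aeval_algebraMap_eq_zero_iff (AlgebraicClosure (ZMod 2)),
      IntermediateField.AdjoinSimple.algebraMap_gen]
  have hdvd := two_mul_natDegree_dvd_finrank hmon hirr h0 h1 hgen
  rw [IntermediateField.adjoin.finrank hint, ← natDegree_Qtrans] at hdvd
  have hle := Nat.le_of_dvd (minpoly.natDegree_pos hint) hdvd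
  have heq : Qtrans f = minpoly (ZMod 2) b :=
    eq_of_monic_of_dvd_of_natDegree_le (minpoly.monic hint) hQmon (minpoly.dvd _ _ hb) hle
  rw [heq]
  exact minpoly.irreducible hint

end Qtrans

theorem stmt_2 (n : ℕ) (hn : 1 < n) (f : Polynomial (ZMod 2))
    (hmon : f.Monic) (hirr : Irreducible f) (hdeg : f.natDegree = n)
    (hB : f.coeff (n - 1) = 0 ∧ f.coeff 1 = 1) :
    (Qtrans f).Monic ∧ Irreducible (Qtrans f) ∧ (Qtrans f).natDegree = 2 * n ∧
      (Qtrans f).coeff (2 * n - 1) = 0 ∧ (Qtrans f).coeff 1 = 0 := by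
  subst hdeg
  obtain ⟨hnext, hone⟩ := hB
  have h0 : f.coeff 0 ≠ 0 := by
    rw [coeff_zero_eq_eval_zero]
    exact hirr.not_isRoot_of_natDegree_ne_one hn.ne'
  have h1 : f.coeff 1 ≠ 0 := hone ▸ one_ne_zero
  have hcoeff : (Qtrans f).coeff 1 = 0 := by
    rw [coeff_one_Qtrans, nextCoeff_of_natDegree_pos (by omega), hnext]
  refine ⟨(leadingCoeff_Qtrans f).trans hmon, irreducible_Qtrans hmon hirr h0 h1,
    natDegree_Qtrans f, ?_, hcoeff⟩
  rw [coeff_Qtrans_two_mul_natDegree_sub (by omega), hcoeff]
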